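/- arXiv:2410.00554 — 7 statements merged into one kernel-verified Lean document; each statement's English description precedes it below -/
import Mathlib

section
/- Let d ≥ 2, k ≥ 2, let S_k be the cyclic-shift unitary on (ℂ^d)^{⊗k} with S_k(v_1 ⊗ ⋯ ⊗ v_k) = v_k ⊗ v_1 ⊗ ⋯ ⊗ v_{k-1}, and D_k = (I + S_k)/2. Then for every Hermitian d×d matrix σ with tr(σ) = 1, the partial trace over the last k−1 tensor factors of D_k σ^{⊗k} D_k† equals (σ + σ^k)/2. -/
open Matrix Kronecker BigOperators

noncomputable section

/-- The cyclically previous index: `m - 1 (mod k)`. -/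
def prevIdx {k : ℕ} (m : Fin k) : Fin k :=
  ⟨(m.val + (k - 1)) % k, Nat.mod_lt _ m.pos⟩

/-- The cyclic-shift unitary `S_k` on `(ℂ^d)^{⊗k}`, determined by
`S_k (v_1 ⊗ ⋯ ⊗ v_k) = v_k ⊗ v_1 ⊗ ⋯ ⊗ v_{k-1}`, written as a matrix in the
standard tensor-product basis indexed by functions `Fin k → Fin d`. -/
def cyc (d k : ℕ) : Matrix (Fin k → Fin d) (Fin k → Fin d) ℂ :=
  fun g f => if g = fun m => f (prevIdx m) then 1 else 0

/-- The SWAP projection `D_k = (I + S_k)/2`. -/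
def Dk (d k : ℕ) : Matrix (Fin k → Fin d) (Fin k → Fin d) ℂ :=
  (1 / 2 : ℂ) • (1 + cyc d k)

/-- The tensor product `A_1 ⊗ A_2 ⊗ ⋯ ⊗ A_k` of `d × d` matrices, acting
factor-wise on `(ℂ^d)^{⊗k}`. -/
def tensOp {d k : ℕ} (A : Fin k → Matrix (Fin d) (Fin d) ℂ) :
    Matrix (Fin k → Fin d) (Fin k → Fin d) ℂ :=
  fun g f => ∏ m, A m (g m) (f m)

/-- The tensor product `v_1 ⊗ ⋯ ⊗ v_k` of vectors in `ℂ^d`. -/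
def tensVec {d k : ℕ} (v : Fin k → (Fin d → ℂ)) : (Fin k → Fin d) → ℂ :=
  fun f => ∏ m, v m (f m)

/-- The partial trace over the last `k - 1` tensor factors, mapping matrices on
`(ℂ^d)^{⊗k}` to `d × d` matrices by tracing out factors `2` through `k`. -/
def ptraceFirst {d k : ℕ} (M : Matrix (Fin k → Fin d) (Fin k → Fin d) ℂ) :
    Matrix (Fin d) (Fin d) ℂ :=
  fun a b => ∑ r : {i : Fin k // i.val ≠ 0} → Fin d,
    M (fun m => if h : m.val = 0 then a else r ⟨m, h⟩)
      (fun m => if h : m.val = 0 then b else r ⟨m, h⟩)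

theorem prev_zero (n : ℕ) : prevIdx (0 : Fin (n+1)) = Fin.last n := by
  apply Fin.ext
  simp [prevIdx]

theorem prev_succ (n : ℕ) (i : Fin n) : prevIdx i.succ = i.castSucc := by
  apply Fin.ext
  have : (i : ℕ) + 1 + n = i + (n + 1) := by ring
  simp only [prevIdx, Fin.val_succ, Nat.add_sub_cancel, Fin.val_castSucc, this,
    Nat.add_mod_right]
  exact Nat.mod_eq_of_lt (by omega)

theorem prev_inj (n : ℕ) : Function.Injective (prevIdx : Fin (n+1) → Fin (n+1)) := by
  intro x y
  refine Fin.cases ?_ (fun i => ?_) x <;> refine Fin.cases ?_ (fun j => ?_) y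
  · simp
  · rw [prev_zero, prev_succ]; intro h; exact absurd h.symm (Fin.castSucc_lt_last j).ne
  · rw [prev_zero, prev_succ]; intro h; exact absurd h (Fin.castSucc_lt_last i).ne
  · rw [prev_succ, prev_succ]; intro h; rw [Fin.castSucc_injective _ h]

def prevE (n : ℕ) : Equiv.Perm (Fin (n+1)) :=
  Equiv.ofBijective prevIdx (Finite.injective_iff_bijective.mp (prev_inj n))

theorem cyc_apply (d n : ℕ) (g f : Fin (n+1) → Fin d) :
    cyc d (n+1) g f = if f = g ∘ (prevE n).symm then 1 else 0 := by
  unfold cyc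
  have : (g = fun m => f (prevIdx m)) ↔ f = g ∘ (prevE n).symm := by
    constructor
    · rintro rfl
      funext m
      exact congrArg f ((prevE n).apply_symm_apply m).symm
    · rintro rfl
      funext m
      exact congrArg g ((prevE n).symm_apply_apply m).symm
  simp only [this]

theorem cyc_mul_apply (d n : ℕ) (M : Matrix (Fin (n+1) → Fin d) (Fin (n+1) → Fin d) ℂ) (g f) :
    (cyc d (n+1) * M) g f = M (g ∘ (prevE n).symm) f := by
  simp [Matrix.mul_apply, cyc_apply]

theorem mul_cyc_apply (d n : ℕ) (M : Matrix (Fin (n+1) → Fin d) (Fin (n+1) → Fin d) ℂ) (g f) :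
    (M * (cyc d (n+1))ᴴ) g f = M g (f ∘ (prevE n).symm) := by
  simp [Matrix.mul_apply, cyc_apply, Matrix.conjTranspose_apply]

theorem pt_apply (d n : ℕ) (M : Matrix (Fin (n+1) → Fin d) (Fin (n+1) → Fin d) ℂ) (a b) :
    ptraceFirst M a b = ∑ r : Fin n → Fin d,
      M (Fin.cons a r : Fin (n+1) → Fin d) (Fin.cons b r : Fin (n+1) → Fin d) := by
  unfold ptraceFirst
  let e : {i : Fin (n+1) // i.val ≠ 0} ≃ Fin n :=
    { toFun := fun i => i.1.pred (fun h => i.2 (by simp [h]))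
      invFun := fun i => ⟨i.succ, by simp⟩
      left_inv := fun i => by simp
      right_inv := fun i => by simp }
  refine Fintype.sum_equiv (Equiv.arrowCongr e (Equiv.refl _)) _ _ (fun r => ?_)
  have key : ∀ a : Fin d, (fun m : Fin (n+1) => if h : m.val = 0 then a else r ⟨m, h⟩)
      = (Fin.cons a (Equiv.arrowCongr e (Equiv.refl _) r) : Fin (n+1) → Fin d) := by
    intro a
    funext m
    refine Fin.cases ?_ (fun i => ?_) m
    · simp
    · simp [e, Equiv.arrowCongr]
  rw [key, key]

theorem chain (d : ℕ) (σ : Matrix (Fin d) (Fin d) ℂ) (n : ℕ) : ∀ a b : Fin d,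
    ∑ r : Fin n → Fin d, σ a ((Fin.cons b r : Fin (n+1) → Fin d) (Fin.last n)) *
      ∏ i : Fin n, σ (r i) ((Fin.cons b r : Fin (n+1) → Fin d) i.castSucc)
      = (σ ^ (n+1)) a b := by
  induction n with
  | zero => intro a b; simp
  | succ n ih =>
    intro a b
    rw [pow_succ, Matrix.mul_apply]
    rw [← (Fin.consEquiv (fun _ : Fin (n+1) => Fin d)).sum_comp, Fintype.sum_prod_type]
    refine Finset.sum_congr rfl (fun c _ => ?_)
    rw [← ih a c, Finset.sum_mul]
    refine Finset.sum_congr rfl (fun r _ => ?_)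
    rw [Fin.prod_univ_succ]
    simp only [Fin.consEquiv_apply, Fin.cons_zero, Fin.cons_succ, Fin.castSucc_zero,
      ← Fin.succ_last, ← Fin.succ_castSucc]
    ring

theorem pt_cyc (d n : ℕ) (σ : Matrix (Fin d) (Fin d) ℂ) :
    ptraceFirst (cyc d (n+1) * tensOp (fun _ : Fin (n+1) => σ)) = σ ^ (n+1) := by
  ext a b
  rw [pt_apply, ← chain]
  refine Finset.sum_congr rfl (fun r _ => ?_)
  rw [cyc_mul_apply]
  unfold tensOp
  rw [← Equiv.prod_comp (prevE n), Fin.prod_univ_succ]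
  have h0 : prevE n 0 = Fin.last n := prev_zero n
  have hs : ∀ i : Fin n, prevE n i.succ = i.castSucc := prev_succ n
  have h0' : (prevE n).symm (Fin.last n) = 0 := by rw [← h0, Equiv.symm_apply_apply]
  have hs' : ∀ i : Fin n, (prevE n).symm i.castSucc = i.succ := fun i => by
    rw [← hs, Equiv.symm_apply_apply]
  simp only [Function.comp, Fin.cons_zero, Fin.cons_succ, h0, hs, h0', hs']

theorem pt_tens (d n : ℕ) (σ : Matrix (Fin d) (Fin d) ℂ) (htr : σ.trace = 1) :
    ptraceFirst (tensOp (fun _ : Fin (n+1) => σ)) = σ := by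
  ext a b
  rw [pt_apply]
  simp only [tensOp, Fin.prod_univ_succ, Fin.cons_zero, Fin.cons_succ]
  rw [← Finset.mul_sum, ← Fintype.piFinset_univ,
    ← Finset.prod_univ_sum (fun _ : Fin n => Finset.univ) (fun _ j => σ j j)]
  have : ∑ j, σ j j = 1 := htr
  simp [this]

theorem cyc_conj (d n : ℕ) (σ : Matrix (Fin d) (Fin d) ℂ) :
    cyc d (n+1) * tensOp (fun _ : Fin (n+1) => σ) * (cyc d (n+1))ᴴ
      = tensOp (fun _ : Fin (n+1) => σ) := by
  ext g f
  rw [mul_cyc_apply, cyc_mul_apply]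
  unfold tensOp
  exact (prevE n).symm.prod_comp (fun m => σ (g m) (f m))

theorem tens_herm (d k : ℕ) (σ : Matrix (Fin d) (Fin d) ℂ) (h : σ.IsHermitian) :
    (tensOp (fun _ : Fin k => σ))ᴴ = tensOp (fun _ : Fin k => σ) := by
  ext g f
  simp only [Matrix.conjTranspose_apply, tensOp, star_prod]
  exact Finset.prod_congr rfl (fun m _ => h.apply _ _)

theorem pt_conj (d k : ℕ) (M : Matrix (Fin k → Fin d) (Fin k → Fin d) ℂ) :
    ptraceFirst Mᴴ = (ptraceFirst M)ᴴ := by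
  ext a b
  simp [ptraceFirst, Matrix.conjTranspose_apply]

theorem pt_add (d k : ℕ) (M N : Matrix (Fin k → Fin d) (Fin k → Fin d) ℂ) :
    ptraceFirst (M + N) = ptraceFirst M + ptraceFirst N := by
  ext a b
  simp [ptraceFirst, Finset.sum_add_distrib]

theorem pt_smul (d k : ℕ) (c : ℂ) (M : Matrix (Fin k → Fin d) (Fin k → Fin d) ℂ) :
    ptraceFirst (c • M) = c • ptraceFirst M := by
  ext a b
  simp [ptraceFirst, Finset.mul_sum]

/-- For a Hermitian `σ` with `tr σ = 1`, the partial trace over the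
last `k-1` factors of `D_k σ^{⊗k} D_k†` equals `(σ + σ^k)/2`. -/
theorem stmt6 (d k : ℕ) (hd : 2 ≤ d) (hk : 2 ≤ k)
    (σ : Matrix (Fin d) (Fin d) ℂ) (hherm : σ.IsHermitian) (htr : σ.trace = 1) :
    ptraceFirst (Dk d k * tensOp (fun _ : Fin k => σ) * (Dk d k)ᴴ)
      = (1 / 2 : ℂ) • (σ + σ ^ k) := by
  obtain ⟨n, rfl⟩ : ∃ n, k = n + 1 := ⟨k - 1, by omega⟩
  have h1 : ptraceFirst (tensOp (fun _ : Fin (n+1) => σ) * (cyc d (n+1))ᴴ) = σ ^ (n+1) := by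
    have := pt_conj d (n+1) (cyc d (n+1) * tensOp (fun _ : Fin (n+1) => σ))
    rw [Matrix.conjTranspose_mul, tens_herm d _ σ hherm, pt_cyc, (hherm.pow (n+1)).eq] at this
    exact this
  have e : Dk d (n+1) * tensOp (fun _ : Fin (n+1) => σ) * (Dk d (n+1))ᴴ
      = (1/4 : ℂ) • (tensOp (fun _ : Fin (n+1) => σ)
        + cyc d (n+1) * tensOp (fun _ : Fin (n+1) => σ)
        + (tensOp (fun _ : Fin (n+1) => σ) * (cyc d (n+1))ᴴ
        + cyc d (n+1) * tensOp (fun _ : Fin (n+1) => σ) * (cyc d (n+1))ᴴ)) := by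
    have hD : (Dk d (n+1))ᴴ = (1/2 : ℂ) • (1 + (cyc d (n+1))ᴴ) := by
      simp [Dk, Matrix.conjTranspose_smul]
    rw [hD, Dk, Matrix.smul_mul, Matrix.smul_mul, Matrix.mul_smul, smul_smul, add_mul, mul_add,
      one_mul, mul_one, add_mul]
    norm_num
  rw [e, cyc_conj, pt_smul, pt_add, pt_add, pt_add, h1, pt_cyc, pt_tens d n σ htr]
  module
end
end

section
/- Let d ≥ 2, k ≥ 2, 1 ≤ t ≤ k−1, let ψ ∈ ℂ^d be a unit vector with projector P = |ψ⟩⟨ψ|, let Ω = P + λ(I − P) with λ ∈ [0,1), and let σ_ε = (1−ε)P + ε(I − P)/(d−1) with ε ∈ [0,1]. With S_k the cyclic-shift unitary on (ℂ^d)^{⊗k} and D_k = (I + S_k)/2, one has tr[(Ω^{⊗t} ⊗ P ⊗ I^{⊗(k−t−1)}) · D_k σ_ε^{⊗k} D_k†] = (1/2)[(1−ε)(1 − (1−λ)ε)^t + (1−ε)^k]. -/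
open Matrix Kronecker BigOperators

noncomputable section

def nextIdx {k : ℕ} (m : Fin k) : Fin k :=
  ⟨(m.val + 1) % k, Nat.mod_lt _ m.pos⟩

lemma next_prev {k : ℕ} (m : Fin k) : nextIdx (prevIdx m) = m := by
  apply Fin.ext
  have := m.isLt
  simp only [nextIdx, prevIdx, Nat.mod_add_mod]
  rw [show m.val + (k - 1) + 1 = m.val + k by omega, Nat.add_mod_right, Nat.mod_eq_of_lt this]

lemma prev_next {k : ℕ} (m : Fin k) : prevIdx (nextIdx m) = m := by
  apply Fin.ext
  have := m.isLt
  simp only [nextIdx, prevIdx, Nat.mod_add_mod]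
  rw [show m.val + 1 + (k - 1) = m.val + k by omega, Nat.add_mod_right, Nat.mod_eq_of_lt this]

def nextEquiv (k : ℕ) : Fin k ≃ Fin k := ⟨nextIdx, prevIdx, prev_next, next_prev⟩

lemma next_iter {k : ℕ} (m : Fin k) (i : ℕ) : (nextIdx^[i] m).val = (m.val + i) % k := by
  induction i with
  | zero => simp [Nat.mod_eq_of_lt m.isLt]
  | succ i ih =>
    rw [Function.iterate_succ_apply']
    simp only [nextIdx, ih, Nat.mod_add_mod]
    rfl

lemma next_reach {k : ℕ} (m j : Fin k) : ∃ i < k + k, nextIdx^[i] m = j := by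
  have h1 := m.isLt
  have h2 := j.isLt
  refine ⟨j.val + k - m.val, by omega, ?_⟩
  apply Fin.ext
  rw [next_iter, show m.val + (j.val + k - m.val) = j.val + k by omega, Nat.add_mod_right,
    Nat.mod_eq_of_lt h2]

section

variable {d k : ℕ}

lemma tens_mul (A B : Fin k → Matrix (Fin d) (Fin d) ℂ) :
    tensOp A * tensOp B = tensOp (fun m => A m * B m) := by
  ext f g
  simp only [tensOp, Matrix.mul_apply]
  rw [Finset.prod_univ_sum, Fintype.piFinset_univ]
  exact Finset.sum_congr rfl fun h _ => Finset.prod_mul_distrib.symm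

lemma tens_trace (A : Fin k → Matrix (Fin d) (Fin d) ℂ) :
    (tensOp A).trace = ∏ m, (A m).trace := by
  simp only [tensOp, Matrix.trace, Matrix.diag]
  rw [Finset.prod_univ_sum, Fintype.piFinset_univ]

lemma tens_conjT (A : Fin k → Matrix (Fin d) (Fin d) ℂ) :
    (tensOp A)ᴴ = tensOp (fun m => (A m)ᴴ) := by
  ext f g
  simp [tensOp, Matrix.conjTranspose_apply]

lemma tens_cyc_apply (C : Fin k → Matrix (Fin d) (Fin d) ℂ) (f g) :
    (tensOp C * cyc d k) f g = ∏ m, C m (f m) (g (prevIdx m)) := by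
  simp [Matrix.mul_apply, cyc, tensOp]

lemma cyc_iff (f h : Fin k → Fin d) : (f = fun m => h (prevIdx m)) ↔ h = fun m => f (nextIdx m) := by
  constructor
  · rintro rfl; funext m; simp [prev_next]
  · rintro rfl; funext m; simp [next_prev]

lemma cyc_tens_apply (C : Fin k → Matrix (Fin d) (Fin d) ℂ) (f g) :
    (cyc d k * tensOp C) f g = ∏ m, C m (f (nextIdx m)) (g m) := by
  simp [Matrix.mul_apply, cyc, tensOp, cyc_iff]

lemma tens_cyc (C : Fin k → Matrix (Fin d) (Fin d) ℂ) :
    tensOp C * cyc d k = cyc d k * tensOp (fun m => C (nextIdx m)) := by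
  ext f g
  rw [tens_cyc_apply, cyc_tens_apply]
  rw [← (nextEquiv k).prod_comp]
  simp [nextEquiv, prev_next]

lemma cyc_unit : cyc d k * (cyc d k)ᴴ = 1 := by
  ext f g
  simp only [Matrix.mul_apply, Matrix.conjTranspose_apply, cyc, cyc_iff]
  simp only [apply_ite star, star_one, star_zero, mul_ite, mul_one, mul_zero, Matrix.one_apply]
  rw [Finset.sum_ite_eq' ]
  simp only [Finset.mem_univ, if_true]
  refine if_congr ?_ rfl rfl
  rw [← cyc_iff]
  simp [next_prev]

open Classical in
lemma tr_insert (X : Fin k → Matrix (Fin d) (Fin d) ℂ) (P : Matrix (Fin d) (Fin d) ℂ)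
    (j : Fin k) (hc : ∀ m, P * X m = X m * P) (hj : X j * P = X j) (n : ℕ) :
    (tensOp X * cyc d k).trace =
      (tensOp (fun m => X m * if ∃ i < n, nextIdx^[i] m = j then P else 1) * cyc d k).trace := by
  have hX : ∀ m, ∀ (p : Prop) [Decidable p], (if p then P else 1) * X m = X m * (if p then P else 1) := by
    intro m p _; split_ifs <;> simp [hc]
  induction n with
  | zero => simp
  | succ n ih =>
    rw [ih, ← tens_mul, Matrix.mul_assoc, tens_cyc, ← Matrix.mul_assoc, Matrix.trace_mul_comm,
      ← Matrix.mul_assoc, tens_mul]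
    congr 3
    funext m
    rw [hX]
    by_cases hm : m = j
    · subst hm
      have hh : ∃ i < n + 1, nextIdx^[i] m = m := ⟨0, by omega, rfl⟩
      rw [if_pos hh]
      split_ifs <;> simp [hj]
    · congr 1
      refine if_congr ?_ rfl rfl
      constructor
      · rintro ⟨i, hi, h⟩
        exact ⟨i + 1, by omega, by rw [Function.iterate_succ_apply]; exact h⟩
      · rintro ⟨i, hi, h⟩
        cases i with
        | zero => exact absurd h hm
        | succ i => exact ⟨i, by omega, by rw [Function.iterate_succ_apply] at h; exact h⟩

lemma tens_smul (b : Fin k → ℂ) (P : Matrix (Fin d) (Fin d) ℂ) :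
    tensOp (fun m => b m • P) = (∏ m, b m) • tensOp (fun _ : Fin k => P) := by
  ext f g
  simp [tensOp, Finset.prod_mul_distrib]

lemma tr_P_cyc (ψ : Fin d → ℂ) (hψ : star ψ ⬝ᵥ ψ = 1) :
    (tensOp (fun _ : Fin k => vecMulVec ψ (star ψ)) * cyc d k).trace = 1 := by
  simp only [Matrix.trace, Matrix.diag, tens_cyc_apply, vecMulVec_apply]
  have : ∀ f : Fin k → Fin d, ∏ m, ψ (f m) * star ψ (f (prevIdx m)) =
      ∏ m, star ψ (f m) * ψ (f m) := by
    intro f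
    rw [Finset.prod_mul_distrib, Finset.prod_mul_distrib, mul_comm]
    congr 1
    exact (nextEquiv k).symm.prod_comp (fun m => star ψ (f m))
  simp only [this]
  have h2 := (Finset.prod_univ_sum (fun _ : Fin k => (Finset.univ : Finset (Fin d)))
    (fun _ i => star ψ i * ψ i))
  rw [Fintype.piFinset_univ] at h2
  rw [← h2]
  simp only [dotProduct] at hψ
  rw [hψ, Finset.prod_const_one]

lemma tr_cyc_val (X : Fin k → Matrix (Fin d) (Fin d) ℂ) (ψ : Fin d → ℂ) (hψ : star ψ ⬝ᵥ ψ = 1)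
    (P : Matrix (Fin d) (Fin d) ℂ) (hP : P = vecMulVec ψ (star ψ))
    (j : Fin k) (hc : ∀ m, P * X m = X m * P) (hj : X j * P = X j) (b : ℂ)
    (hb : ∀ m, X m * P = b • P) :
    (tensOp X * cyc d k).trace = b ^ k := by
  rw [tr_insert X P j hc hj (k + k)]
  have : (fun m => X m * (open Classical in if ∃ i < k + k, nextIdx^[i] m = j then P else 1))
      = fun m => b • P := by
    funext m
    rw [if_pos (next_reach m j), hb]
  rw [this, tens_smul (fun _ => b), Matrix.smul_mul, Matrix.trace_smul, hP, tr_P_cyc ψ hψ]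
  simp

lemma key_alg {R : Type*} [Ring R] [Algebra ℂ R] (M T S S' : R) (hTS : T * S = S * T)
    (hU : S * S' = 1) :
    M * (((1 / 2 : ℂ) • (1 + S)) * T * ((1 / 2 : ℂ) • (1 + S')))
      = (1 / 4 : ℂ) • (M * T + M * T * S + (M * T * S' + M * T)) := by
  have hSS : M * (S * T * S') = M * T := by
    rw [← hTS, mul_assoc T, hU, mul_one]
  have hST : M * (S * T) = M * T * S := by rw [← hTS, mul_assoc]
  simp only [smul_mul_assoc, mul_smul_comm, smul_smul]
  congr 1
  · norm_num
  · simp only [mul_add, add_mul, one_mul, mul_one]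
    rw [hSS, hST, mul_assoc M T S']

end

/-- with `P` inserted on factor `t+1`,
`tr[(Ω^{⊗t} ⊗ P ⊗ I^{⊗(k−t−1)}) · D_k σ_ε^{⊗k} D_k†]
  = (1/2)[(1−ε)(1−(1−λ)ε)^t + (1−ε)^k]`. -/
theorem stmt9 (d k t : ℕ) (hd : 2 ≤ d) (hk : 2 ≤ k) (ht1 : 1 ≤ t) (ht2 : t ≤ k - 1)
    (ψ : Fin d → ℂ) (hψ : star ψ ⬝ᵥ ψ = 1)
    (lam ε : ℝ) (hlam0 : 0 ≤ lam) (hlam1 : lam < 1) (hε0 : 0 ≤ ε) (hε1 : ε ≤ 1)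
    (P Ω σ : Matrix (Fin d) (Fin d) ℂ)
    (hP : P = vecMulVec ψ (star ψ))
    (hΩ : Ω = P + (lam : ℂ) • (1 - P))
    (hσ : σ = ((1 - ε : ℝ) : ℂ) • P + ((ε / ((d : ℝ) - 1) : ℝ) : ℂ) • (1 - P)) :
    (tensOp (fun m : Fin k => if m.val < t then Ω else if m.val = t then P else 1)
        * (Dk d k * tensOp (fun _ : Fin k => σ) * (Dk d k)ᴴ)).trace
      = (1 / 2 : ℂ) * (((1 - ε) * (1 - (1 - lam) * ε) ^ t + (1 - ε) ^ k : ℝ) : ℂ) := by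
  have hPP : P * P = P := by
    rw [hP, vecMulVec_mul_vecMulVec, hψ]; simp
  have hPH : Pᴴ = P := by
    rw [hP, conjTranspose_vecMulVec, star_star]
  have hPt : P.trace = 1 := by
    rw [hP, trace_vecMulVec, dotProduct_comm, hψ]
  have hQ : P * (1 - P) = 0 := by rw [mul_sub, mul_one, hPP, sub_self]
  have hQ' : (1 - P) * P = 0 := by rw [sub_mul, one_mul, hPP, sub_self]
  have hQQ : (1 - P) * (1 - P) = 1 - P := by rw [mul_sub, mul_one, hQ', sub_zero]
  have hQt : (1 - P).trace = (d : ℂ) - 1 := by simp [hPt]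
  have hd1 : (d : ℂ) - 1 ≠ 0 := by
    rw [sub_ne_zero]; exact_mod_cast (by omega : d ≠ 1)
  generalize hQdef : 1 - P = Q at *
  have hQH : Qᴴ = Q := by rw [← hQdef]; simp [hPH]
  have hPσ : P * σ = ((1 - ε : ℝ) : ℂ) • P := by
    rw [hσ]; simp [mul_add, hPP, hQ]
  have hσP : σ * P = ((1 - ε : ℝ) : ℂ) • P := by
    rw [hσ]; simp [add_mul, hPP, hQ']
  have hΩP : Ω * P = P := by
    rw [hΩ]; simp [add_mul, hPP, hQ']
  have hPΩ : P * Ω = P := by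
    rw [hΩ]; simp [mul_add, hPP, hQ]
  have hσH : σᴴ = σ := by
    rw [hσ]; simp [hPH, hQH, conjTranspose_smul]
  have hΩH : Ωᴴ = Ω := by
    rw [hΩ]; simp [hPH, hQH, conjTranspose_smul]
  have hΩσ : Ω * σ = ((1 - ε : ℝ) : ℂ) • P + (lam * (ε / ((d : ℝ) - 1) : ℝ) : ℂ) • Q := by
    rw [hΩ, hσ]
    simp only [mul_add, add_mul, Matrix.smul_mul, Matrix.mul_smul, hPP, hQ, hQ', hQQ, smul_smul, smul_zero, add_zero, zero_add]
    rw [mul_comm (lam : ℂ)]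
  have hσΩ : σ * Ω = Ω * σ := by
    rw [hΩσ, hΩ, hσ]
    simp only [mul_add, add_mul, Matrix.smul_mul, Matrix.mul_smul, hPP, hQ, hQ', hQQ, smul_smul, smul_zero, add_zero, zero_add]
  have tσ : σ.trace = 1 := by
    rw [hσ]; simp only [trace_add, trace_smul, hPt, hQt]; push_cast; simp only [smul_eq_mul]
    field_simp; ring
  have tPσ : (P * σ).trace = ((1 - ε : ℝ) : ℂ) := by
    rw [hPσ, trace_smul, hPt]; simp
  have tΩσ : (Ω * σ).trace = ((1 - (1 - lam) * ε : ℝ) : ℂ) := by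
    rw [hΩσ]; simp only [trace_add, trace_smul, hPt, hQt]; push_cast; simp only [smul_eq_mul]
    field_simp; ring
  set A : Fin k → Matrix (Fin d) (Fin d) ℂ :=
    fun m => if m.val < t then Ω else if m.val = t then P else 1 with hA
  have htk : t < k := by omega
  have hAcomm : ∀ m, A m * σ = σ * A m := by
    intro m; simp only [hA]; split_ifs <;> simp [hσΩ, hPσ, hσP]
  have hAH : ∀ m, (A m)ᴴ = A m := by
    intro m; simp only [hA]; split_ifs <;> simp [hΩH, hPH]
  have hAP : ∀ m, A m * P = P := by
    intro m; simp only [hA]; split_ifs <;> simp [hΩP, hPP]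
  have hPA : ∀ m, P * A m = P := by
    intro m; simp only [hA]; split_ifs <;> simp [hPΩ, hPP]
  set T := tensOp (fun _ : Fin k => σ) with hT
  set M := tensOp A with hM
  set S := cyc d k with hS
  have hTS : T * S = S * T := tens_cyc _
  have hMT : M * T = tensOp (fun m => A m * σ) := tens_mul _ _
  have hMTH : (M * T)ᴴ = M * T := by
    rw [hMT, tens_conjT]; congr 1; funext m
    rw [conjTranspose_mul, hσH, hAH, hAcomm]
  have e1 : (M * T * S).trace = ((1 - ε : ℝ) : ℂ) ^ k := by
    rw [hMT]
    refine tr_cyc_val _ ψ hψ P hP ⟨t, htk⟩ ?_ ?_ _ ?_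
    · intro m
      rw [← mul_assoc, hPA, mul_assoc, hσP, hPσ, Matrix.mul_smul, hAP]
    · simp [hA, hPσ, hPP]
    · intro m
      rw [mul_assoc, hσP, Matrix.mul_smul, hAP]
  have e2 : (M * T * Sᴴ).trace = ((1 - ε : ℝ) : ℂ) ^ k := by
    have : M * T * Sᴴ = (S * (M * T))ᴴ := by rw [conjTranspose_mul, hMTH]
    rw [this, trace_conjTranspose, trace_mul_comm, e1]
    simp
  have e0 : (M * T).trace = ((1 - ε : ℝ) : ℂ) * ((1 - (1 - lam) * ε : ℝ) : ℂ) ^ t := by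
    rw [hMT, tens_trace]
    set F : ℕ → ℂ :=
        (fun i : ℕ => if i < t then ((1 - (1 - lam) * ε : ℝ) : ℂ) else if i = t then
          ((1 - ε : ℝ) : ℂ) else 1) with hF
    have : ∀ m : Fin k, (A m * σ).trace = F m.val := by
      intro m; simp only [hA, hF]; split_ifs
      · exact tΩσ
      · exact tPσ
      · rw [one_mul, tσ]
    rw [Finset.prod_congr rfl (fun m _ => this m), Fin.prod_univ_eq_prod_range F k]
    rw [← Finset.prod_range_mul_prod_Ico _ htk, Finset.prod_range_succ]
    rw [Finset.prod_congr rfl (g := fun _ => ((1 - (1 - lam) * ε : ℝ) : ℂ)) (s₂ := Finset.range t)]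
    · rw [Finset.prod_eq_one (s := Finset.Ico _ _)]
      · simp [hF, mul_comm]
      · intro i hi
        rw [Finset.mem_Ico] at hi
        simp only [hF]
        rw [if_neg (by omega), if_neg (by omega)]
    · intro i hi
      simp only [hF]
      rw [if_pos (Finset.mem_range.mp hi)]
  have key : M * (Dk d k * T * (Dk d k)ᴴ)
      = (1 / 4 : ℂ) • (M * T + M * T * S + (M * T * Sᴴ + M * T)) := by
    have hDH : (Dk d k)ᴴ = (1 / 2 : ℂ) • (1 + Sᴴ) := by
      simp [Dk, conjTranspose_smul, hS]
    rw [hDH, Dk, ← hS]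
    exact key_alg M T S Sᴴ hTS cyc_unit
  rw [key, trace_smul, trace_add, trace_add, trace_add, e0, e1, e2]
  push_cast
  rw [smul_eq_mul]
  ring
end
end

section
/- Let d ≥ 2, k ≥ 2, 1 ≤ t ≤ k−1, λ ∈ [0,1), and 0 < ε < 1/2. Define the conditional fidelity of an unmeasured copy after a passed collective test as F = [(1−ε)(1 − (1−λ)ε)^t + (1−ε)^k] / [(1 − (1−λ)ε)^t + (1−ε)^k + λ^t ε^k/(d−1)^{k−1}]. Then F > 1 − ε; that is, the output infidelity 1 − F is strictly smaller than the input infidelity ε. -/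
open BigOperators

/-- the conditional fidelity
`F = [(1−ε)(1−(1−λ)ε)^t + (1−ε)^k] / [(1−(1−λ)ε)^t + (1−ε)^k + λ^t ε^k/(d−1)^{k−1}]`
of an unmeasured copy after a passed collective test satisfies `F > 1 − ε`, i.e.
the output infidelity `1 − F` is strictly smaller than the input infidelity `ε`. -/
theorem stmt10 (d k t : ℕ) (hd : 2 ≤ d) (hk : 2 ≤ k) (ht1 : 1 ≤ t) (ht2 : t ≤ k - 1)
    (lam ε : ℝ) (hlam0 : 0 ≤ lam) (hlam1 : lam < 1) (hε0 : 0 < ε) (hε1 : ε < 1 / 2)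
    (F : ℝ)
    (hF : F = ((1 - ε) * (1 - (1 - lam) * ε) ^ t + (1 - ε) ^ k) /
      ((1 - (1 - lam) * ε) ^ t + (1 - ε) ^ k
        + lam ^ t * ε ^ k / ((d : ℝ) - 1) ^ (k - 1))) :
    F > 1 - ε := by
  obtain ⟨m, rfl⟩ : ∃ m, k = m + 1 := ⟨k - 1, by omega⟩
  have hm : m ≠ 0 := by omega
  have hd' : (1 : ℝ) ≤ (d : ℝ) - 1 := by
    have : (2 : ℝ) ≤ d := by exact_mod_cast hd
    linarith
  have hD : (1 : ℝ) ≤ ((d : ℝ) - 1) ^ (m + 1 - 1) := one_le_pow₀ hd'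
  have hl : lam ^ t ≤ 1 := pow_le_one₀ hlam0 hlam1.le
  have hl0 : 0 ≤ lam ^ t := pow_nonneg hlam0 t
  have he : 0 < ε ^ (m + 1) := pow_pos hε0 _
  have hX0 : 0 ≤ lam ^ t * ε ^ (m + 1) / ((d : ℝ) - 1) ^ (m + 1 - 1) := by positivity
  have hX : lam ^ t * ε ^ (m + 1) / ((d : ℝ) - 1) ^ (m + 1 - 1) ≤ ε ^ (m + 1) := by
    refine (div_le_self (by positivity) hD).trans ?_
    exact mul_le_of_le_one_left he.le hl
  have hA : 0 < (1 - (1 - lam) * ε) ^ t := by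
    apply pow_pos
    nlinarith
  have h1 : 0 < 1 - ε := by linarith
  have hB : 0 < (1 - ε) ^ (m + 1) := pow_pos h1 _
  have hlt : ε ^ m < (1 - ε) ^ m := pow_lt_pow_left₀ (by linarith) hε0.le hm
  have hkey : (1 - ε) * ε ^ (m + 1) < ε * (1 - ε) ^ (m + 1) := by
    have := mul_lt_mul_of_pos_left hlt (mul_pos hε0 h1)
    rw [pow_succ, pow_succ]
    linarith
  have hX2 := mul_le_mul_of_nonneg_left hX h1.le
  rw [hF, gt_iff_lt, lt_div_iff₀ (by linarith)]
  linarith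
end

section
/- Let d ≥ 2, k ≥ 2, 1 ≤ t ≤ k, let ψ ∈ ℂ^d be a unit vector with projector P = |ψ⟩⟨ψ|, and let Ω = P + λ(I − P) with λ ∈ [0,1). With S_k the cyclic-shift unitary on (ℂ^d)^{⊗k} and D_k = (I + S_k)/2, one has tr[(Ω^{⊗t} ⊗ I^{⊗(k−t)}) · D_k (I/d^k) D_k†] = (1/2)[(λ + (1−λ)/d)^t + ((d−1)λ^t + 1)/d^k], where I/d^k is the maximally mixed state on (ℂ^d)^{⊗k}. -/
open Matrix Kronecker BigOperators

noncomputable section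

lemma prevIdx_zero {n : ℕ} : prevIdx (0 : Fin (n+1)) = Fin.last n := by
  ext; simp [prevIdx]

lemma prevIdx_succ {n : ℕ} (i : Fin n) : prevIdx i.succ = i.castSucc := by
  ext
  simp only [prevIdx, Fin.val_succ, Fin.val_castSucc]
  have : i.val + 1 + (n + 1 - 1) = i.val + (n + 1) := by omega
  rw [this, Nat.add_mod_right, Nat.mod_eq_of_lt (by omega)]

lemma prevIdx_bij (k : ℕ) : Function.Bijective (prevIdx (k := k)) := by
  rw [← Finite.surjective_iff_bijective]
  cases k with
  | zero => intro x; exact x.elim0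
  | succ n =>
    intro x
    induction x using Fin.lastCases with
    | last => exact ⟨0, prevIdx_zero⟩
    | cast i => exact ⟨i.succ, prevIdx_succ i⟩

def shiftE (d k : ℕ) : (Fin k → Fin d) ≃ (Fin k → Fin d) :=
  (Equiv.ofBijective _ (prevIdx_bij k)).symm.arrowCongr (Equiv.refl _)

lemma shiftE_apply (d k : ℕ) (f : Fin k → Fin d) : shiftE d k f = fun m => f (prevIdx m) := by
  ext m; simp [shiftE]

lemma cyc_mul_star (d k : ℕ) : cyc d k * (cyc d k)ᴴ = 1 := by
  ext g h
  simp only [Matrix.mul_apply, Matrix.conjTranspose_apply, cyc, ← shiftE_apply]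
  rw [(shiftE d k).sum_comp (fun f => (if g = f then (1:ℂ) else 0) * star (if h = f then (1:ℂ) else 0))]
  simp [Matrix.one_apply, eq_comm]

lemma path_prod {d : ℕ} (n : ℕ) (A : Fin (n+1) → Matrix (Fin d) (Fin d) ℂ) (x y : Fin d) :
    (List.ofFn A).prod x y = ∑ f : Fin (n+1) → Fin d, if f (Fin.last n) = y then
      A 0 x (f 0) * ∏ i : Fin n, A i.succ (f i.castSucc) (f i.succ) else 0 := by
  induction n generalizing x with
  | zero =>
    rw [← (Equiv.funUnique (Fin 1) (Fin d)).symm.sum_comp]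
    simp
  | succ n ih =>
    rw [List.ofFn_succ, List.prod_cons, Matrix.mul_apply,
      ← (Fin.consEquiv (fun _ => Fin d)).sum_comp, Fintype.sum_prod_type]
    refine Finset.sum_congr rfl fun z _ => ?_
    rw [ih, Finset.mul_sum]
    refine Finset.sum_congr rfl fun f _ => ?_
    simp only [Fin.consEquiv_apply, ← Fin.succ_last, Fin.cons_succ, Fin.cons_zero, Fin.prod_univ_succ,
      Fin.castSucc_zero, ← Fin.succ_castSucc, mul_ite, mul_zero]

lemma cyc_sum {d k : ℕ} (hk : 1 ≤ k) (A : Fin k → Matrix (Fin d) (Fin d) ℂ) :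
    ∑ f : Fin k → Fin d, ∏ m, A m (f (prevIdx m)) (f m) = (List.ofFn A).prod.trace := by
  obtain ⟨n, rfl⟩ : ∃ n, k = n + 1 := ⟨k - 1, by omega⟩
  simp only [Matrix.trace, Matrix.diag, path_prod]
  rw [Finset.sum_comm]
  refine Finset.sum_congr rfl fun f _ => ?_
  simp [Fin.prod_univ_succ, prevIdx_zero, prevIdx_succ]

lemma ofFn_prod {d : ℕ} (k t : ℕ) (h : t ≤ k) (M : Matrix (Fin d) (Fin d) ℂ) :
    (List.ofFn (fun m : Fin k => if m.val < t then M else 1)).prod = M ^ t := by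
  induction k generalizing t with
  | zero => obtain rfl : t = 0 := by omega
            simp
  | succ k ih =>
    rw [List.ofFn_succ, List.prod_cons]
    cases t with
    | zero => simpa using ih 0 (by omega)
    | succ t =>
      have := ih t (by omega)
      simp only [Fin.val_succ, Nat.add_lt_add_iff_right, this]
      simp [pow_succ']

lemma trace_tens_cycH {d k : ℕ} (hk : 1 ≤ k) (A : Fin k → Matrix (Fin d) (Fin d) ℂ) :
    (tensOp A * (cyc d k)ᴴ).trace = (List.ofFn A).prod.trace := by
  rw [← cyc_sum hk]
  simp only [Matrix.trace, Matrix.diag, Matrix.mul_apply, Matrix.conjTranspose_apply, cyc, tensOp]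
  rw [Finset.sum_comm]
  refine Finset.sum_congr rfl fun f _ => ?_
  simp [apply_ite star]

lemma trace_tens_cyc {d k : ℕ} (hk : 1 ≤ k) (A : Fin k → Matrix (Fin d) (Fin d) ℂ) :
    (tensOp A * cyc d k).trace = (List.ofFn (fun m => (A m)ᵀ)).prod.trace := by
  rw [← cyc_sum hk]
  simp only [Matrix.trace, Matrix.diag, Matrix.mul_apply, cyc, tensOp, Matrix.transpose_apply]
  refine Finset.sum_congr rfl fun f _ => ?_
  simp

lemma trace_tens {d k : ℕ} (A : Fin k → Matrix (Fin d) (Fin d) ℂ) :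
    (tensOp A).trace = ∏ m, (A m).trace := by
  simp only [Matrix.trace, Matrix.diag, tensOp]
  rw [Finset.prod_univ_sum]
  simp

lemma prod_ite_lt (k t : ℕ) (h : t ≤ k) (a b : ℂ) :
    ∏ m : Fin k, (if m.val < t then a else b) = a ^ t * b ^ (k - t) := by
  rw [Fin.prod_univ_eq_prod_range (fun m => if m < t then a else b) k]
  obtain ⟨s, rfl⟩ := Nat.exists_eq_add_of_le h
  rw [Finset.prod_range_add]
  rw [Finset.prod_congr rfl (g := fun _ => a) (fun x hx => by simp [Finset.mem_range.1 hx])]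
  simp

/-- for the maximally mixed state `I/d^k` on `(ℂ^d)^{⊗k}`,
`tr[(Ω^{⊗t} ⊗ I^{⊗(k−t)}) · D_k (I/d^k) D_k†]
  = (1/2)[(λ + (1−λ)/d)^t + ((d−1)λ^t + 1)/d^k]`. -/
theorem stmt11 (d k t : ℕ) (hd : 2 ≤ d) (hk : 2 ≤ k) (ht1 : 1 ≤ t) (ht2 : t ≤ k)
    (ψ : Fin d → ℂ) (hψ : star ψ ⬝ᵥ ψ = 1)
    (lam : ℝ) (hlam0 : 0 ≤ lam) (hlam1 : lam < 1)
    (P Ω : Matrix (Fin d) (Fin d) ℂ)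
    (hP : P = vecMulVec ψ (star ψ))
    (hΩ : Ω = P + (lam : ℂ) • (1 - P)) :
    (tensOp (fun m : Fin k => if m.val < t then Ω else 1)
        * (Dk d k * (((d : ℂ) ^ k)⁻¹ • (1 : Matrix (Fin k → Fin d) (Fin k → Fin d) ℂ))
            * (Dk d k)ᴴ)).trace
      = (1 / 2 : ℂ) * (((lam + (1 - lam) / (d : ℝ)) ^ t
          + (((d : ℝ) - 1) * lam ^ t + 1) / (d : ℝ) ^ k : ℝ) : ℂ) := by
  have hPP : P * P = P := by
    rw [hP, vecMulVec_mul_vecMulVec, hψ]; simp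
  have hPt : P.trace = 1 := by
    rw [hP, trace_vecMulVec, dotProduct_comm, hψ]
  have hpow : ∀ n : ℕ, Ω ^ n = P + ((lam : ℂ) ^ n) • (1 - P) := by
    intro n
    induction n with
    | zero => simp
    | succ n ih =>
      rw [pow_succ, ih, hΩ]
      simp only [add_mul, mul_add, mul_sub, sub_mul, smul_mul_assoc, mul_smul_comm, hPP, one_mul,
        mul_one, sub_self, smul_zero, add_zero, zero_add, sub_zero, smul_smul, pow_succ]
      rw [add_sub_cancel_left, smul_smul, mul_comm]
  have htr : ∀ n : ℕ, (Ω ^ n).trace = 1 + (lam : ℂ) ^ n * (d - 1) := by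
    intro n
    rw [hpow, trace_add, trace_smul, trace_sub, hPt]; simp
  set T := tensOp (fun m : Fin k => if m.val < t then Ω else 1) with hT
  have h1 : T.trace = (1 + (lam : ℂ) * (d - 1)) ^ t * (d : ℂ) ^ (k - t) := by
    rw [hT, trace_tens, ← prod_ite_lt k t ht2]
    refine Finset.prod_congr rfl fun m _ => ?_
    have := htr 1
    simp only [pow_one] at this
    split_ifs <;> simp [this]
  have h2 : (T * (cyc d k)ᴴ).trace = 1 + (lam : ℂ) ^ t * (d - 1) := by
    rw [hT, trace_tens_cycH (by omega), ofFn_prod k t ht2, htr]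
  have h3 : (T * cyc d k).trace = 1 + (lam : ℂ) ^ t * (d - 1) := by
    rw [hT, trace_tens_cyc (by omega)]
    have : (fun m : Fin k => (if m.val < t then Ω else 1)ᵀ)
        = fun m : Fin k => if m.val < t then Ωᵀ else 1 := by
      ext1 m; split_ifs <;> simp
    rw [this, ofFn_prod k t ht2, ← transpose_pow, trace_transpose, htr]
  have hD : Dk d k * (((d : ℂ) ^ k)⁻¹ • (1 : Matrix (Fin k → Fin d) (Fin k → Fin d) ℂ))
            * (Dk d k)ᴴ = (((d : ℂ) ^ k)⁻¹ * (1 / 4)) • (1 + 1 + cyc d k + (cyc d k)ᴴ) := by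
    have hs : star (1 / 2 : ℂ) = 1 / 2 := by simp
    rw [Dk, conjTranspose_smul, conjTranspose_add, conjTranspose_one, hs]
    simp only [smul_mul_assoc, mul_smul_comm, mul_one, smul_smul]
    rw [add_mul, mul_add, mul_add, cyc_mul_star, one_mul, one_mul, mul_one]
    congr 1
    · ring
    · abel
  rw [hD, mul_smul_comm, trace_smul, mul_add, mul_add, mul_add, mul_one, trace_add, trace_add,
    trace_add, h1, h2, h3]
  have hd0 : (d : ℂ) ≠ 0 := by
    have : d ≠ 0 := by omega
    exact_mod_cast this
  obtain ⟨s, rfl⟩ := Nat.exists_eq_add_of_le ht2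
  push_cast
  have e : (lam : ℂ) + (1 - lam) / d = (1 + (lam : ℂ) * (d - 1)) / d := by
    field_simp; ring
  rw [e, div_pow, Nat.add_sub_cancel_left, pow_add]
  simp only [smul_eq_mul]
  field_simp
  ring
end
end

section
/- Let d ≥ 2, k ≥ 2, 1 ≤ t ≤ k, let ψ, ψ⊥ ∈ ℂ^d be orthonormal vectors, let Ω = |ψ⟩⟨ψ| + λ(I − |ψ⟩⟨ψ|) with λ ∈ [0,1), and let 0 ≤ ε ≤ 1/k. Define φ' = (1/√k) Σ_{m=1}^{k} ψ^{⊗(m−1)} ⊗ ψ⊥ ⊗ ψ^{⊗(k−m)} and φ = √(1−kε)·ψ^{⊗k} + √(kε)·φ'. Then, with S_k the cyclic-shift unitary on (ℂ^d)^{⊗k} and D_k = (I + S_k)/2, one has S_k φ = φ (so D_k |φ⟩⟨φ| D_k† = |φ⟩⟨φ|), and the passing probability satisfies tr[(Ω^{⊗t} ⊗ I^{⊗(k−t)}) · D_k |φ⟩⟨φ| D_k†] = 1 − (1−λ) t ε. -/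
open Matrix Kronecker BigOperators

noncomputable section

theorem prevIdx_inj {k : ℕ} : Function.Injective (prevIdx (k := k)) := by
  intro a b h
  have h1 : (a.val + (k - 1)) % k = (b.val + (k - 1)) % k := congrArg Fin.val h
  have h2 : a.val ≡ b.val [MOD k] := Nat.ModEq.add_right_cancel' (k - 1) h1
  exact Fin.ext (Nat.ModEq.eq_of_lt_of_lt h2 a.isLt b.isLt)

def prevEquiv (k : ℕ) : Equiv.Perm (Fin k) :=
  Equiv.ofBijective prevIdx (Finite.injective_iff_bijective.mp prevIdx_inj)

theorem cyc_tensVec {d k : ℕ} (v : Fin k → Fin d → ℂ) :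
    (cyc d k).mulVec (tensVec v) = tensVec (fun m => v (prevIdx m)) := by
  funext g
  have hiff : ∀ f : Fin k → Fin d, (g = fun m => f (prevIdx m)) ↔
      f = fun m => g ((prevEquiv k).symm m) := by
    intro f
    constructor
    · rintro rfl
      funext m
      exact congrArg f ((prevEquiv k).apply_symm_apply m).symm
    · rintro rfl
      funext m
      exact congrArg g ((prevEquiv k).symm_apply_apply m).symm
  simp only [Matrix.mulVec, dotProduct, cyc, hiff, ite_mul, one_mul, zero_mul,
    Finset.sum_ite_eq', Finset.sum_ite_eq, Finset.mem_univ, if_true]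
  simp only [tensVec]
  rw [← Equiv.prod_comp (prevEquiv k)]
  refine Finset.prod_congr rfl fun m _ => ?_
  rw [Equiv.symm_apply_apply]
  rfl

theorem tensOp_tensVec {d k : ℕ} (A : Fin k → Matrix (Fin d) (Fin d) ℂ)
    (v : Fin k → Fin d → ℂ) :
    (tensOp A).mulVec (tensVec v) = tensVec (fun m => (A m).mulVec (v m)) := by
  funext g
  simp only [Matrix.mulVec, dotProduct, tensOp, tensVec]
  rw [Finset.prod_univ_sum, Fintype.piFinset_univ]
  simp only [Finset.prod_mul_distrib]

theorem dot_tensVec {d k : ℕ} (u v : Fin k → Fin d → ℂ) :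
    star (tensVec u) ⬝ᵥ tensVec v = ∏ m, (star (u m) ⬝ᵥ v m) := by
  simp only [dotProduct, tensVec, Pi.star_apply]
  rw [Finset.prod_univ_sum, Fintype.piFinset_univ]
  simp only [Finset.prod_mul_distrib, star_prod]

theorem count_sum (k t : ℕ) (ht : t ≤ k) (l : ℂ) :
    ∑ m : Fin k, (if m.val < t then l else 1) = (k : ℂ) - (1 - l) * t := by
  rw [Fin.sum_univ_eq_sum_range (fun i => if i < t then l else (1 : ℂ)) k]
  obtain ⟨s, rfl⟩ := Nat.exists_eq_add_of_le ht
  rw [Finset.sum_range_add]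
  rw [Finset.sum_congr rfl (g := fun _ => l)
    (fun i hi => if_pos (Finset.mem_range.mp hi))]
  simp
  ring


/-- for the worst-case globally controlled state
`φ = √(1−kε)·ψ^{⊗k} + √(kε)·φ'` one has `S_k φ = φ`
(so `D_k |φ⟩⟨φ| D_k† = |φ⟩⟨φ|`), and the passing probability satisfies
`tr[(Ω^{⊗t} ⊗ I^{⊗(k−t)}) · D_k |φ⟩⟨φ| D_k†] = 1 − (1−λ)tε`. -/
theorem stmt17 (d k t : ℕ) (hd : 2 ≤ d) (hk : 2 ≤ k) (ht1 : 1 ≤ t) (ht2 : t ≤ k)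
    (ψ ψp : Fin d → ℂ) (hψ : star ψ ⬝ᵥ ψ = 1) (hψp : star ψp ⬝ᵥ ψp = 1)
    (horth : star ψ ⬝ᵥ ψp = 0)
    (lam ε : ℝ) (hlam0 : 0 ≤ lam) (hlam1 : lam < 1)
    (hε0 : 0 ≤ ε) (hε1 : ε ≤ 1 / (k : ℝ))
    (Ω : Matrix (Fin d) (Fin d) ℂ)
    (hΩ : Ω = vecMulVec ψ (star ψ) + (lam : ℂ) • (1 - vecMulVec ψ (star ψ)))
    (φ' φ : (Fin k → Fin d) → ℂ)
    (hφ' : φ' = (((Real.sqrt k : ℝ) : ℂ))⁻¹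
        • ∑ m : Fin k, tensVec (fun i : Fin k => if i = m then ψp else ψ))
    (hφ : φ = ((Real.sqrt (1 - k * ε) : ℝ) : ℂ) • tensVec (fun _ : Fin k => ψ)
        + ((Real.sqrt (k * ε) : ℝ) : ℂ) • φ') :
    (cyc d k).mulVec φ = φ ∧
    Dk d k * vecMulVec φ (star φ) * (Dk d k)ᴴ = vecMulVec φ (star φ) ∧
    (tensOp (fun m : Fin k => if m.val < t then Ω else 1)
        * (Dk d k * vecMulVec φ (star φ) * (Dk d k)ᴴ)).trace
      = ((1 - (1 - lam) * t * ε : ℝ) : ℂ) := by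
  have horth' : star ψp ⬝ᵥ ψ = 0 := by
    have := congrArg star horth
    rwa [star_dotProduct, star_zero, star_star, dotProduct_comm, ← dotProduct_comm] at this
  have hΩψ : Ω.mulVec ψ = ψ := by
    rw [hΩ, add_mulVec, smul_mulVec, sub_mulVec, vecMulVec_mulVec, hψ]
    simp
  have hΩp : Ω.mulVec ψp = (lam : ℂ) • ψp := by
    rw [hΩ, add_mulVec, smul_mulVec, sub_mulVec, vecMulVec_mulVec, horth]
    simp
  set E0 : (Fin k → Fin d) → ℂ := tensVec (fun _ : Fin k => ψ) with hE0
  set E : Fin k → (Fin k → Fin d) → ℂ :=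
    fun m => tensVec (fun i : Fin k => if i = m then ψp else ψ) with hE
  have hkpos : (0 : ℝ) < k := by
    have : 0 < k := by omega
    exact_mod_cast this
  have h00 : star E0 ⬝ᵥ E0 = 1 := by
    rw [hE0, dot_tensVec]; simp [hψ]
  have h0m : ∀ m, star E0 ⬝ᵥ E m = 0 := by
    intro m
    rw [hE0, hE]
    simp only
    rw [dot_tensVec]
    exact Finset.prod_eq_zero (Finset.mem_univ m) (by simp [horth])
  have hm0 : ∀ m, star (E m) ⬝ᵥ E0 = 0 := by
    intro m
    rw [hE0, hE]
    simp only
    rw [dot_tensVec]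
    exact Finset.prod_eq_zero (Finset.mem_univ m) (by simp [horth'])
  have hmn : ∀ m n, star (E m) ⬝ᵥ E n = if m = n then 1 else 0 := by
    intro m n
    rw [hE]
    simp only
    rw [dot_tensVec]
    split_ifs with h
    · subst h
      refine Finset.prod_eq_one fun i _ => ?_
      split_ifs <;> assumption
    · exact Finset.prod_eq_zero (Finset.mem_univ m) (by simp [h, horth'])
  have hc0 : (cyc d k).mulVec E0 = E0 := cyc_tensVec _
  have hcE : (cyc d k).mulVec (∑ m, E m) = ∑ m, E m := by
    rw [mulVec_sum, ← Equiv.sum_comp (prevEquiv k)]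
    refine Finset.sum_congr rfl fun m _ => ?_
    rw [hE]
    simp only
    rw [cyc_tensVec]
    congr 1
    funext i
    have : (prevIdx i = prevEquiv k m) ↔ i = m := (prevEquiv k).injective.eq_iff
    simp only [this]
  have hS : (cyc d k).mulVec φ = φ := by
    rw [hφ, hφ', mulVec_add, mulVec_smul, mulVec_smul, mulVec_smul, hc0, hcE]
  have hD : (Dk d k).mulVec φ = φ := by
    rw [Dk, smul_mulVec, add_mulVec, one_mulVec, hS, ← two_smul ℂ φ, smul_smul]
    norm_num
  have hDD : Dk d k * vecMulVec φ (star φ) * (Dk d k)ᴴ = vecMulVec φ (star φ) := by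
    rw [mul_vecMulVec, hD, vecMulVec_mul, ← star_mulVec, hD]
  refine ⟨hS, hDD, ?_⟩
  rw [hDD, mul_vecMulVec, trace_vecMulVec, dotProduct_comm]
  have hT0 : (tensOp (fun m : Fin k => if m.val < t then Ω else 1)).mulVec E0 = E0 := by
    rw [hE0, tensOp_tensVec]
    congr 1
    funext m
    split_ifs
    · exact hΩψ
    · exact one_mulVec _
  have hTE : ∀ m, (tensOp (fun m : Fin k => if m.val < t then Ω else 1)).mulVec (E m)
      = (if m.val < t then (lam : ℂ) else 1) • E m := by
    intro m
    rw [hE]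
    simp only
    rw [tensOp_tensVec]
    funext f
    simp only [tensVec, Pi.smul_apply, smul_eq_mul]
    rw [← Finset.mul_prod_erase _ _ (Finset.mem_univ m),
      ← Finset.mul_prod_erase _ (fun i => (if i = m then ψp else ψ) (f i)) (Finset.mem_univ m),
      ← mul_assoc]
    congr 1
    · rw [if_pos rfl]
      split_ifs
      · rw [hΩp]; rfl
      · rw [one_mulVec, one_mul]
    · refine Finset.prod_congr rfl fun i hi => ?_
      rw [if_neg (Finset.ne_of_mem_erase hi)]
      split_ifs <;> simp [hΩψ]
  have hsum : star (∑ m, E m) ⬝ᵥ (∑ m : Fin k, (if m.val < t then (lam : ℂ) else 1) • E m)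
      = (k : ℂ) - (1 - lam) * t := by
    rw [← count_sum k t ht2, star_sum, sum_dotProduct]
    refine Finset.sum_congr rfl fun m _ => ?_
    rw [dotProduct_sum]
    simp only [dotProduct_smul, hmn, smul_eq_mul, mul_ite, mul_one, mul_zero]
    simp
  have hs0 : star (∑ m, E m) ⬝ᵥ E0 = 0 := by
    rw [star_sum, sum_dotProduct]
    exact Finset.sum_eq_zero fun m _ => hm0 m
  have h0s : star E0 ⬝ᵥ (∑ m : Fin k, (if m.val < t then (lam : ℂ) else 1) • E m) = 0 := by
    rw [dotProduct_sum]
    exact Finset.sum_eq_zero fun m _ => by rw [dotProduct_smul, h0m, smul_zero]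
  have hTφ : (tensOp (fun m : Fin k => if m.val < t then Ω else 1)).mulVec φ
      = ((Real.sqrt (1 - k * ε) : ℝ) : ℂ) • E0 + ((Real.sqrt (k * ε) : ℝ) : ℂ) •
        (((Real.sqrt k : ℝ) : ℂ))⁻¹ • ∑ m : Fin k, (if m.val < t then (lam : ℂ) else 1) • E m := by
    rw [hφ, hφ', mulVec_add, mulVec_smul, mulVec_smul, mulVec_smul, hT0, mulVec_sum]
    rw [Finset.sum_congr rfl fun m _ => hTE m]
  rw [hTφ, hφ, hφ']
  simp only [star_add, star_smul, add_dotProduct, dotProduct_add, smul_dotProduct,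
    dotProduct_smul, h00, hs0, h0s, hsum, smul_eq_mul, star_inv₀, Complex.star_def,
    Complex.conj_ofReal]
  have h1 : 0 ≤ 1 - k * ε := by
    rw [le_div_iff₀ hkpos] at hε1
    linarith
  have e1 : (((Real.sqrt (1 - k * ε) : ℝ) : ℂ)) * ((Real.sqrt (1 - k * ε) : ℝ) : ℂ)
      = 1 - k * ε := by
    rw [← Complex.ofReal_mul, Real.mul_self_sqrt h1]; push_cast; rfl
  have e2 : (((Real.sqrt (k * ε) : ℝ) : ℂ)) * ((Real.sqrt (k * ε) : ℝ) : ℂ) = k * ε := by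
    rw [← Complex.ofReal_mul, Real.mul_self_sqrt (by positivity)]; push_cast; rfl
  have e3 : (((Real.sqrt k : ℝ) : ℂ))⁻¹ * (((Real.sqrt k : ℝ) : ℂ))⁻¹ = (k : ℂ)⁻¹ := by
    rw [← mul_inv, ← Complex.ofReal_mul, Real.mul_self_sqrt hkpos.le]; push_cast; rfl
  have e4 : (k : ℂ) * (k : ℂ)⁻¹ = 1 := mul_inv_cancel₀ (by exact_mod_cast hkpos.ne')
  push_cast
  generalize ((Real.sqrt (1 - k * ε) : ℝ) : ℂ) = a at *
  generalize ((Real.sqrt (k * ε) : ℝ) : ℂ) = b at *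
  generalize (((Real.sqrt k : ℝ) : ℂ))⁻¹ = c at *
  linear_combination e1 + (c * c * ((k : ℂ) - (1 - lam) * t)) * e2
    + (k * ε * ((k : ℂ) - (1 - lam) * t)) * e3 + (ε * ((k : ℂ) - (1 - lam) * t)) * e4
end
end

section
/- Let d ≥ 2, k ≥ 2, 1 ≤ t ≤ k−1, let ψ, ψ⊥ ∈ ℂ^d be orthonormal vectors, let Ω = |ψ⟩⟨ψ| + λ(I − |ψ⟩⟨ψ|) with λ ∈ [0,1), let 0 ≤ ε ≤ 1/k with (1−λ)tε < 1, and define φ' = (1/√k) Σ_{m=1}^{k} ψ^{⊗(m−1)} ⊗ ψ⊥ ⊗ ψ^{⊗(k−m)} and φ = √(1−kε)·ψ^{⊗k} + √(kε)·φ'. With P = |ψ⟩⟨ψ|, the conditional fidelity of an unmeasured copy, F = tr[(Ω^{⊗t} ⊗ I^{⊗(k−t−1)} ⊗ P) |φ⟩⟨φ|] / tr[(Ω^{⊗t} ⊗ I^{⊗(k−t)}) |φ⟩⟨φ|], satisfies F = 1 − ε/(1 − (1−λ)tε); equivalently, the conditional infidelity equals ε/(1 − (1−λ)tε), which is strictly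 greater than ε whenever ε > 0 and t ≥ 1. -/
open Matrix Kronecker BigOperators

noncomputable section

theorem aux_mulVec {d k : ℕ} (A : Fin k → Matrix (Fin d) (Fin d) ℂ) (v : Fin k → (Fin d → ℂ)) :
    tensOp A *ᵥ tensVec v = tensVec (fun m => A m *ᵥ v m) := by
  funext g
  simp only [tensOp, tensVec, mulVec, dotProduct]
  rw [Finset.prod_univ_sum, Fintype.piFinset_univ]
  simp only [Finset.prod_mul_distrib]

theorem aux_inner {d k : ℕ} (u v : Fin k → (Fin d → ℂ)) :
    star (tensVec u) ⬝ᵥ tensVec v = ∏ m, (star (u m) ⬝ᵥ v m) := by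
  simp only [tensVec, dotProduct, Pi.star_apply, star_prod]
  rw [Finset.prod_univ_sum, Fintype.piFinset_univ]
  simp only [Finset.prod_mul_distrib]

theorem aux_smul {d k : ℕ} (u : Fin k → (Fin d → ℂ)) (a : Fin k → ℂ) :
    tensVec (fun m => a m • u m) = (∏ m, a m) • tensVec u := by
  funext g
  simp [tensVec, Finset.prod_mul_distrib]

theorem aux_main {d k : ℕ} (hk : 2 ≤ k)
    (ψ ψp : Fin d → ℂ) (hψ : star ψ ⬝ᵥ ψ = 1) (hψp : star ψp ⬝ᵥ ψp = 1)
    (horth : star ψ ⬝ᵥ ψp = 0) (ε : ℝ) (hε0 : 0 ≤ ε) (hε1 : ε ≤ 1 / (k : ℝ))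
    (φ' φ : (Fin k → Fin d) → ℂ)
    (hφ' : φ' = (((Real.sqrt k : ℝ) : ℂ))⁻¹
        • ∑ m : Fin k, tensVec (fun i : Fin k => if i = m then ψp else ψ))
    (hφ : φ = ((Real.sqrt (1 - k * ε) : ℝ) : ℂ) • tensVec (fun _ : Fin k => ψ)
        + ((Real.sqrt (k * ε) : ℝ) : ℂ) • φ')
    (A : Fin k → Matrix (Fin d) (Fin d) ℂ) (c : Fin k → ℂ)
    (hA : ∀ m, A m *ᵥ ψ = ψ) (hAp : ∀ m, A m *ᵥ ψp = c m • ψp) :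
    (tensOp A * vecMulVec φ (star φ)).trace = 1 - k * ε + ε * ∑ m, c m := by
  have horth' : star ψp ⬝ᵥ ψ = 0 := by
    have := congrArg star horth
    rw [← star_dotProduct_star, star_star] at this
    simpa [dotProduct_comm] using this
  have hkp : (0 : ℝ) < k := by positivity
  have hkε : 0 ≤ 1 - k * ε := by
    rw [le_div_iff₀ hkp] at hε1
    linarith
  set e0 := tensVec (fun _ : Fin k => ψ) with he0
  set e : Fin k → (Fin k → Fin d) → ℂ :=
    fun m => tensVec (fun i : Fin k => if i = m then ψp else ψ) with he
  have h00 : star e0 ⬝ᵥ e0 = 1 := by rw [he0, aux_inner]; simp [hψ]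
  have h0m : ∀ m, star e0 ⬝ᵥ e m = 0 := by
    intro m
    rw [he0, he]
    simp only [aux_inner]
    exact Finset.prod_eq_zero (Finset.mem_univ m) (by simp [horth])
  have hm0 : ∀ m, star (e m) ⬝ᵥ e0 = 0 := by
    intro m
    rw [he0, he]
    simp only [aux_inner]
    exact Finset.prod_eq_zero (Finset.mem_univ m) (by simp [horth'])
  have hmn : ∀ m n, star (e m) ⬝ᵥ e n = if m = n then 1 else 0 := by
    intro m n
    rw [he]
    simp only [aux_inner]
    split_ifs with h
    · subst h
      refine Finset.prod_eq_one fun i _ => ?_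
      split_ifs <;> assumption
    · exact Finset.prod_eq_zero (Finset.mem_univ m) (by simp [h, horth'])
  have hM0 : tensOp A *ᵥ e0 = e0 := by rw [he0, aux_mulVec]; simp [hA]
  have hMm : ∀ m, tensOp A *ᵥ e m = c m • e m := by
    intro m
    simp only [he]
    rw [aux_mulVec]
    have : (fun i => A i *ᵥ (if i = m then ψp else ψ)) =
        fun i => (if i = m then c m else 1) • (if i = m then ψp else ψ) := by
      funext i
      split_ifs with h
      · subst h; exact hAp _
      · simp [hA]
    rw [this, aux_smul]
    simp
  have htr : (tensOp A * vecMulVec φ (star φ)).trace = star φ ⬝ᵥ (tensOp A *ᵥ φ) := by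
    rw [mul_vecMulVec, trace_vecMulVec, dotProduct_comm]
  set a : ℝ := Real.sqrt (1 - k * ε) with ha
  have ha2 : (a : ℂ) * a = 1 - k * ε := by
    have := Real.mul_self_sqrt hkε
    rw [← ha] at this
    exact_mod_cast congrArg (fun x : ℝ => (x : ℂ)) this
  obtain ⟨b, hb, hb2⟩ : ∃ b : ℝ, ((Real.sqrt (k * ε) : ℝ) : ℂ) * ((Real.sqrt k : ℝ) : ℂ)⁻¹ = b
      ∧ (b : ℂ) * b = ε := by
    refine ⟨Real.sqrt ε, ?_, ?_⟩
    · rw [Real.sqrt_mul hkp.le]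
      have : ((Real.sqrt k : ℝ) : ℂ) ≠ 0 := by
        exact_mod_cast (Real.sqrt_pos.2 hkp).ne'
      push_cast
      field_simp
    · exact_mod_cast congrArg (fun x : ℝ => (x : ℂ)) (Real.mul_self_sqrt hε0)
  have hφ2 : φ = (a : ℂ) • e0 + (b : ℂ) • ∑ m, e m := by
    rw [hφ, hφ', smul_smul, hb]
  have hMφ : tensOp A *ᵥ φ = (a : ℂ) • e0 + (b : ℂ) • ∑ m, c m • e m := by
    rw [hφ2, mulVec_add, mulVec_smul, mulVec_smul, hM0, mulVec_sum]
    simp only [hMm]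
  rw [htr, hMφ, hφ2]
  simp only [star_add, star_smul, star_sum, add_dotProduct, dotProduct_add, smul_dotProduct,
    dotProduct_smul, sum_dotProduct, dotProduct_sum, h00, h0m, hm0, hmn]
  simp
  rw [← Finset.sum_mul]
  linear_combination ha2 + (∑ m, c m) * hb2

/-- under worst-case global unitary control the conditional fidelity
of an unmeasured copy,
`F = tr[(Ω^{⊗t} ⊗ I^{⊗(k−t−1)} ⊗ P)|φ⟩⟨φ|] / tr[(Ω^{⊗t} ⊗ I^{⊗(k−t)})|φ⟩⟨φ|]`,
satisfies `F = 1 − ε/(1 − (1−λ)tε)`; the conditional infidelity `ε/(1 − (1−λ)tε)`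
is strictly greater than `ε` whenever `ε > 0` (and `t ≥ 1`). -/
theorem stmt18 (d k t : ℕ) (hd : 2 ≤ d) (hk : 2 ≤ k) (ht1 : 1 ≤ t) (ht2 : t ≤ k - 1)
    (ψ ψp : Fin d → ℂ) (hψ : star ψ ⬝ᵥ ψ = 1) (hψp : star ψp ⬝ᵥ ψp = 1)
    (horth : star ψ ⬝ᵥ ψp = 0)
    (lam ε : ℝ) (hlam0 : 0 ≤ lam) (hlam1 : lam < 1)
    (hε0 : 0 ≤ ε) (hε1 : ε ≤ 1 / (k : ℝ)) (hsmall : (1 - lam) * t * ε < 1)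
    (P Ω : Matrix (Fin d) (Fin d) ℂ)
    (hP : P = vecMulVec ψ (star ψ))
    (hΩ : Ω = P + (lam : ℂ) • (1 - P))
    (φ' φ : (Fin k → Fin d) → ℂ)
    (hφ' : φ' = (((Real.sqrt k : ℝ) : ℂ))⁻¹
        • ∑ m : Fin k, tensVec (fun i : Fin k => if i = m then ψp else ψ))
    (hφ : φ = ((Real.sqrt (1 - k * ε) : ℝ) : ℂ) • tensVec (fun _ : Fin k => ψ)
        + ((Real.sqrt (k * ε) : ℝ) : ℂ) • φ')
    (F : ℂ)
    (hF : F = (tensOp (fun m : Fin k =>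
          if m.val < t then Ω else if m.val = k - 1 then P else 1)
            * vecMulVec φ (star φ)).trace
        / (tensOp (fun m : Fin k => if m.val < t then Ω else 1)
            * vecMulVec φ (star φ)).trace) :
    F = ((1 - ε / (1 - (1 - lam) * t * ε) : ℝ) : ℂ) ∧
    (0 < ε → ε < ε / (1 - (1 - lam) * t * ε)) := by
  have hPψ : P *ᵥ ψ = ψ := by
    rw [hP, vecMulVec_mulVec, hψ]; simp
  have hPψp : P *ᵥ ψp = 0 := by
    rw [hP, vecMulVec_mulVec, horth]; simp
  have hΩψ : Ω *ᵥ ψ = ψ := by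
    rw [hΩ, add_mulVec, smul_mulVec, sub_mulVec, hPψ]; simp
  have hΩψp : Ω *ᵥ ψp = (lam : ℂ) • ψp := by
    rw [hΩ, add_mulVec, smul_mulVec, sub_mulVec, hPψp]; simp
  have h1 := aux_main hk ψ ψp hψ hψp horth ε hε0 hε1 φ' φ hφ' hφ
    (fun m : Fin k => if m.val < t then Ω else if m.val = k - 1 then P else 1)
    (fun m => if m.val < t then (lam : ℂ) else if m.val = k - 1 then 0 else 1)
    (by intro m; split_ifs <;> simp [hΩψ, hPψ])
    (by intro m; split_ifs <;> simp [hΩψp, hPψp])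
  have h2 := aux_main hk ψ ψp hψ hψp horth ε hε0 hε1 φ' φ hφ' hφ
    (fun m : Fin k => if m.val < t then Ω else 1)
    (fun m => if m.val < t then (lam : ℂ) else 1)
    (by intro m; split_ifs <;> simp [hΩψ])
    (by intro m; split_ifs <;> simp [hΩψp])
  have hs2 : ∑ m : Fin k, (if m.val < t then (lam : ℂ) else 1) = k - (1 - lam) * t := by
    rw [Fin.sum_univ_eq_sum_range (fun i => if i < t then (lam : ℂ) else 1) k]
    obtain ⟨r, rfl⟩ : ∃ r, k = t + r := ⟨k - t, by omega⟩
    rw [Finset.sum_range_add]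
    rw [Finset.sum_congr rfl (g := fun _ => (lam : ℂ))
      (fun i hi => by simp [Finset.mem_range.1 hi])]
    simp
    ring
  have hs1 : ∑ m : Fin k, (if m.val < t then (lam : ℂ) else if m.val = k - 1 then 0 else 1)
      = k - (1 - lam) * t - 1 := by
    rw [← hs2, eq_sub_iff_add_eq]
    have : (1 : ℂ) = ∑ m : Fin k, if m = ⟨k - 1, by omega⟩ then 1 else 0 := by simp
    refine (congrArg (_ + ·) this).trans ?_
    rw [← Finset.sum_add_distrib]
    refine Finset.sum_congr rfl fun m _ => ?_
    simp only [Fin.ext_iff]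
    split_ifs <;> first | omega | simp
  rw [hs1] at h1
  rw [hs2] at h2
  have hpos : 0 < 1 - (1 - lam) * t * ε := by linarith
  constructor
  · rw [hF, h1, h2]
    have hne : (1 - (1 - lam) * t * ε : ℂ) ≠ 0 := by exact_mod_cast hpos.ne'
    have e2 : (1 - k * ε + ε * (k - (1 - lam) * t) : ℂ) = 1 - (1 - lam) * t * ε := by ring
    rw [e2]
    push_cast
    rw [div_eq_iff hne, sub_mul 1 (_ / _), div_mul_cancel₀ _ hne]
    ring
  · intro hε
    rw [lt_div_iff₀ hpos]
    have ht : (0 : ℝ) < t := by exact_mod_cast ht1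
    have : 0 < (1 - lam) * t * ε := by
      have : 0 < 1 - lam := by linarith
      positivity
    nlinarith
end
end

section
/- Let H be a finite-dimensional complex Hilbert space of the form H_A ⊗ H_B, let S_A be a unitary on H_A and S_B a unitary on H_B, and let |Φ⟩ = (|00⟩ + |11⟩)/√2 be the Bell state of a two-qubit ancilla ℂ² ⊗ ℂ². Let cS_A = |0⟩⟨0| ⊗ I + |1⟩⟨1| ⊗ S_A be controlled by the first ancilla qubit and cS_B = |0⟩⟨0| ⊗ I + |1⟩⟨1| ⊗ S_B controlled by the second ancilla qubit. Then for every matrix ρ on H_A ⊗ H_B, the partial trace over the two ancilla qubits of (|Φ⟩⟨Φ| ⊗ I) · (cS_A ⊗ cS_B) (|Φ⟩⟨Φ| ⊗ ρ) (cS_A ⊗ cS_B)† equals D ρ D†, where D = (I + S_A ⊗ S_B)/2. -/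
open Matrix Kronecker BigOperators

noncomputable section

/-- The computational basis vector `|0⟩` of a control qubit `ℂ²`. -/
def ket0 : Fin 2 → ℂ := fun i => if i = 0 then 1 else 0

/-- The computational basis vector `|1⟩` of a control qubit `ℂ²`. -/
def ket1 : Fin 2 → ℂ := fun i => if i = 1 then 1 else 0

/-- The controlled-`S` operator `|0⟩⟨0| ⊗ I + |1⟩⟨1| ⊗ S` on `ℂ² ⊗ H`. -/
def ctrl {m : Type*} [Fintype m] [DecidableEq m] (S : Matrix m m ℂ) :
    Matrix (Fin 2 × m) (Fin 2 × m) ℂ :=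
  vecMulVec ket0 (star ket0) ⊗ₖ (1 : Matrix m m ℂ)
    + vecMulVec ket1 (star ket1) ⊗ₖ S

/-- The Bell state `|Φ⟩ = (|00⟩ + |11⟩)/√2` of the two-qubit ancilla `ℂ² ⊗ ℂ²`. -/
def bell : Fin 2 × Fin 2 → ℂ :=
  fun p => if p.1 = p.2 then (((Real.sqrt 2 : ℝ) : ℂ))⁻¹ else 0

/-- `cS_A ⊗ cS_B`, rearranged so that the first ancilla qubit controls `S_A` on `H_A`
and the second ancilla qubit controls `S_B` on `H_B`, as an operator on
`(ℂ² ⊗ ℂ²) ⊗ (H_A ⊗ H_B)`. -/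
def combineCtrl {nA nB : Type*} (CA : Matrix (Fin 2 × nA) (Fin 2 × nA) ℂ)
    (CB : Matrix (Fin 2 × nB) (Fin 2 × nB) ℂ) :
    Matrix ((Fin 2 × Fin 2) × nA × nB) ((Fin 2 × Fin 2) × nA × nB) ℂ :=
  fun p q => CA (p.1.1, p.2.1) (q.1.1, q.2.1) * CB (p.1.2, p.2.2) (q.1.2, q.2.2)

/-- Partial trace over the two ancilla qubits. -/
def ptrAnc2 {nA nB : Type*} [Fintype nA] [Fintype nB]
    (M : Matrix ((Fin 2 × Fin 2) × nA × nB) ((Fin 2 × Fin 2) × nA × nB) ℂ) :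
    Matrix (nA × nB) (nA × nB) ℂ :=
  fun x y => ∑ a : Fin 2 × Fin 2, M (a, x) (a, y)

lemma ptr_kron {nA nB : Type*} [Fintype nA] [Fintype nB]
    (A : Matrix (Fin 2 × Fin 2) (Fin 2 × Fin 2) ℂ) (M : Matrix (nA × nB) (nA × nB) ℂ) :
    ptrAnc2 (A ⊗ₖ M) = A.trace • M := by
  ext x y
  simp only [ptrAnc2, kroneckerMap_apply, Matrix.trace, Matrix.smul_apply, smul_eq_mul,
    Matrix.diag_apply, Finset.sum_mul]

lemma ptr_add {nA nB : Type*} [Fintype nA] [Fintype nB]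
    (M N : Matrix ((Fin 2 × Fin 2) × nA × nB) ((Fin 2 × Fin 2) × nA × nB) ℂ) :
    ptrAnc2 (M + N) = ptrAnc2 M + ptrAnc2 N := by
  ext x y
  simp only [ptrAnc2, Matrix.add_apply, Finset.sum_add_distrib]

lemma comb_eq {nA nB : Type*} [Fintype nA] [DecidableEq nA] [Fintype nB] [DecidableEq nB]
    (SA : Matrix nA nA ℂ) (SB : Matrix nB nB ℂ) :
    combineCtrl (ctrl SA) (ctrl SB) =
      Matrix.single (0, 0) (0, 0) (1 : ℂ) ⊗ₖ ((1 : Matrix nA nA ℂ) ⊗ₖ (1 : Matrix nB nB ℂ))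
      + Matrix.single (0, 1) (0, 1) (1 : ℂ) ⊗ₖ ((1 : Matrix nA nA ℂ) ⊗ₖ SB)
      + Matrix.single (1, 0) (1, 0) (1 : ℂ) ⊗ₖ (SA ⊗ₖ (1 : Matrix nB nB ℂ))
      + Matrix.single (1, 1) (1, 1) (1 : ℂ) ⊗ₖ (SA ⊗ₖ SB) := by
  ext ⟨⟨i, j⟩, a, b⟩ ⟨⟨k, l⟩, c, d⟩
  simp only [combineCtrl, ctrl, Matrix.add_apply, kroneckerMap_apply, vecMulVec_apply, ket0, ket1,
    Pi.star_apply, Matrix.single_apply]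
  fin_cases i <;> fin_cases j <;> fin_cases k <;> fin_cases l <;> simp

lemma bell_tr (p q : Fin 2 × Fin 2) :
    (vecMulVec bell (star bell) * Matrix.single p p (1 : ℂ) * vecMulVec bell (star bell)
      * Matrix.single q q (1 : ℂ)).trace = if p.1 = p.2 ∧ q.1 = q.2 then 1 / 4 else 0 := by
  have h2 : ((Real.sqrt 2 : ℝ) : ℂ) * ((Real.sqrt 2 : ℝ) : ℂ) = 2 := by
    rw [← Complex.ofReal_mul, Real.mul_self_sqrt (by norm_num)]; norm_num
  have h : (((Real.sqrt 2 : ℝ) : ℂ))⁻¹ * (((Real.sqrt 2 : ℝ) : ℂ))⁻¹ = 1 / 2 := by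
    rw [← mul_inv, h2]; norm_num
  have hs : ∀ x y : Fin 2 × Fin 2,
      (vecMulVec bell (star bell) * Matrix.single p p (1 : ℂ)) x y
        = if y = p then bell x * star (bell p) else 0 := by
    intro x y
    by_cases hy : y = p
    · subst hy
      rw [Matrix.mul_single_apply_same]
      simp [vecMulVec_apply]
    · rw [Matrix.mul_single_apply_of_ne _ _ _ _ _ hy]
      simp [hy]
  have hb : ∀ x : Fin 2 × Fin 2, bell x * star (bell x) = if x.1 = x.2 then 1 / 2 else 0 := by
    intro x
    by_cases hx : x.1 = x.2
    · simp only [bell, hx, if_true, star_inv₀, Complex.star_def, Complex.conj_ofReal, h]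
    · simp [bell, hx]
  have key : (vecMulVec bell (star bell) * Matrix.single p p (1 : ℂ) * vecMulVec bell (star bell)
      * Matrix.single q q (1 : ℂ)).trace
      = (bell q * star (bell q)) * (bell p * star (bell p)) := by
    rw [Matrix.trace_mul_single, Matrix.mul_apply]
    simp only [hs, vecMulVec_apply, ite_mul, zero_mul, Finset.sum_ite_eq', Finset.mem_univ,
      if_true, Pi.star_apply, Finset.sum_ite_eq, MulOpposite.op_one, one_smul]
    ring
  rw [key, hb, hb]
  by_cases h1 : p.1 = p.2 <;> by_cases h3 : q.1 = q.2 <;> simp [h1, h3]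
  norm_num

/-- the distributed realization of the SWAP projection: tracing the
two-qubit Bell ancilla out of `(|Φ⟩⟨Φ| ⊗ I) · (cS_A ⊗ cS_B)(|Φ⟩⟨Φ| ⊗ ρ)(cS_A ⊗ cS_B)†`
gives `D ρ D†` with `D = (I + S_A ⊗ S_B)/2`. -/
theorem stmt19 {nA nB : Type*} [Fintype nA] [DecidableEq nA] [Fintype nB] [DecidableEq nB]
    (SA : Matrix nA nA ℂ) (hSA : SA ∈ Matrix.unitaryGroup nA ℂ)
    (SB : Matrix nB nB ℂ) (hSB : SB ∈ Matrix.unitaryGroup nB ℂ)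
    (D : Matrix (nA × nB) (nA × nB) ℂ)
    (hD : D = (1 / 2 : ℂ) • (1 + SA ⊗ₖ SB))
    (ρ : Matrix (nA × nB) (nA × nB) ℂ) :
    ptrAnc2 ((vecMulVec bell (star bell) ⊗ₖ (1 : Matrix (nA × nB) (nA × nB) ℂ))
        * combineCtrl (ctrl SA) (ctrl SB)
        * (vecMulVec bell (star bell) ⊗ₖ ρ)
        * (combineCtrl (ctrl SA) (ctrl SB))ᴴ)
      = D * ρ * Dᴴ := by
  have hc : ∀ p : Fin 2 × Fin 2, (Matrix.single p p (1 : ℂ))ᴴ = Matrix.single p p (1 : ℂ) := by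
    intro p; simp
  rw [hD, comb_eq]
  simp only [conjTranspose_add, conjTranspose_kronecker, hc, mul_add, add_mul,
    ← mul_kronecker_mul, ptr_add, ptr_kron, bell_tr]
  simp [conjTranspose_kronecker, mul_add, add_mul, smul_smul, smul_add]
  norm_num
  try abel
end
end
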